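/- Fix an integer r ≥ 2, rationals q_1,…,q_r ∈ (0,1) with q_1+⋯+q_r = 1, a rational α with 0 < α < 1, a real A > 0 and a real ε with 0 < ε < 1/6. Then there exist C > 0 and N₀ ∈ ℕ such that for every N ≥ N₀ and M ∈ ℕ with α·M = N, every K : Fin r → ℕ with K_i = q_i·M for every i, and every n : Fin r → ℕ with ∑_i n_i = N, n_i ≤ K_i for every i, and |n_i − N·q_i| ≤ A·N^{2/3−ε} for every i, one has |P^F(n|K) − G| ≤ C·N^{−3ε}·G, where G = exp(−N·∑_i (n_i/N − q_i)²/(2(1−α) q_i)) / ((2π(1−α)N)^{(r−1)/2} · ∏_i √q_i). -/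

import Mathlib

open Finset

/-- The fermionic counting probability
`P^F(n|K) = (N!/∏ᵢ nᵢ!) ⬝ ((M-N)!/M!) ⬝ ∏ᵢ Kᵢ!/(Kᵢ-nᵢ)!`
with `M = ∑ᵢ Kᵢ` and `N = ∑ᵢ nᵢ`, assuming `nᵢ ≤ Kᵢ`. -/
noncomputable def PF {r : ℕ} (M : ℕ) (n K : Fin r → ℕ) : ℝ :=
  ((∑ i, n i).factorial : ℝ) / (∏ i, ((n i).factorial : ℝ)) *
    (((M - (∑ i, n i)).factorial : ℝ) / (M.factorial : ℝ)) *
    ∏ i, ((K i).factorial : ℝ) / ((K i - n i).factorial : ℝ)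

/-- The asymptotic Gaussian for the fermionic case at particle density `α = N/M`. -/
noncomputable def GaussF {r : ℕ} (N : ℕ) (n : Fin r → ℕ) (q : Fin r → ℚ) (α : ℚ) : ℝ :=
  Real.exp (-(N : ℝ) *
      ∑ i, ((n i : ℝ) / (N : ℝ) - (q i : ℝ)) ^ 2 / (2 * (1 - (α : ℝ)) * (q i : ℝ))) /
    ((2 * Real.pi * (1 - (α : ℝ)) * N) ^ (((r : ℝ) - 1) / 2) * ∏ i, Real.sqrt (q i : ℝ))


noncomputable def StF (x : ℝ) : ℝ := x * Real.log x - x + Real.log (2 * Real.pi * x) / 2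

lemma stir_upper (n : ℕ) : Real.log (Stirling.stirlingSeq (n+1)) ≤ Real.log (Real.sqrt Real.pi) + 1 / (2 * ((n:ℝ)+1)) := by
  have hmono : Monotone (fun n : ℕ => Real.log (Stirling.stirlingSeq (n+1)) - 1 / (2 * ((n:ℝ)+1))) := by
    apply monotone_nat_of_le_succ
    intro k
    have h := Stirling.log_stirlingSeq_sub_log_stirlingSeq_succ (k+1)
    have h2 : 1 / (4 * ((k:ℝ)+1)^2) ≤ 1 / (2 * ((k:ℝ)+1)) - 1 / (2 * ((k:ℝ)+1+1)) := by
      rw [div_sub_div _ _ (by positivity) (by positivity), div_le_div_iff₀ (by positivity) (by positivity)]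
      have : (0:ℝ) ≤ k := Nat.cast_nonneg k
      nlinarith [mul_nonneg this this, mul_nonneg this (mul_nonneg this this)]
    push_cast at h ⊢
    linarith
  have hlim : Filter.Tendsto (fun n : ℕ => Real.log (Stirling.stirlingSeq (n+1)) - 1 / (2 * ((n:ℝ)+1))) Filter.atTop (nhds (Real.log (Real.sqrt Real.pi) - 0)) := by
    apply Filter.Tendsto.sub
    · exact ((Filter.tendsto_add_atTop_iff_nat 1).2 Stirling.tendsto_stirlingSeq_sqrt_pi).log (by positivity)
    · have := (tendsto_one_div_add_atTop_nhds_zero_nat (𝕜 := ℝ)).const_mul (1/2)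
      simp only [mul_zero] at this
      refine this.congr fun n => ?_
      field_simp
  have := hmono.ge_of_tendsto hlim n
  simp only [sub_zero] at this
  linarith

lemma stir_abs (n : ℕ) (hn : n ≠ 0) : |Real.log (n.factorial : ℝ) - StF n| ≤ 1 / (2 * (n:ℝ)) := by
  have h1 := Stirling.le_log_factorial_stirling hn
  obtain ⟨k, rfl⟩ := Nat.exists_eq_succ_of_ne_zero hn
  have h2 := stir_upper k
  rw [Stirling.log_stirlingSeq_formula] at h2
  have hk : (0:ℝ) < ((k.succ : ℕ) : ℝ) := by positivity
  have e1 : Real.log (Real.sqrt Real.pi) = Real.log Real.pi / 2 := by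
    rw [Real.log_sqrt Real.pi_pos.le]
  have hpi := Real.pi_pos
  have e2 : Real.log (2 * Real.pi * ((k.succ : ℕ) : ℝ)) = Real.log 2 + Real.log Real.pi + Real.log ((k.succ : ℕ) : ℝ) := by
    rw [Real.log_mul (by positivity) (by positivity), Real.log_mul (by positivity) (by positivity)]
  have e3 : Real.log (2 * ((k.succ : ℕ) : ℝ)) = Real.log 2 + Real.log ((k.succ : ℕ) : ℝ) := by
    rw [Real.log_mul (by positivity) (by positivity)]
  have e4 : Real.log (((k.succ : ℕ) : ℝ) / Real.exp 1) = Real.log ((k.succ : ℕ) : ℝ) - 1 := by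
    rw [Real.log_div (by positivity) (by positivity), Real.log_exp]
  have e5 : Real.log (2 * Real.pi) = Real.log 2 + Real.log Real.pi := by
    rw [Real.log_mul (by positivity) (by positivity)]
  unfold StF
  rw [abs_le]
  have hp : (0:ℝ) ≤ 1 / (2 * ((k.succ : ℕ) : ℝ)) := by positivity
  simp only [Nat.succ_eq_add_one] at *
  rw [e3, e4, e1] at h2
  rw [e5] at h1
  rw [e2]
  have e6 : ((k + 1 : ℕ) : ℝ) = (k:ℝ) + 1 := by push_cast; ring
  rw [← e6] at h2
  constructor <;> linarith

lemma taylorF (a d : ℝ) (ha : 0 < a) (hd : |d| ≤ a / 2) :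
    |StF (a + d) - (StF a + d * Real.log a + d^2 / (2 * a))| ≤ 4 * |d|^3 / a^2 + |d| / a := by
  obtain ⟨t, rfl⟩ : ∃ t, d = a * t := ⟨d / a, by field_simp⟩
  rw [abs_mul, abs_of_pos ha] at hd ⊢
  have ht : |t| ≤ 1/2 := by
    by_contra h
    push Not at h
    nlinarith
  have htt := abs_le.1 ht
  have h1 : (0:ℝ) < 1 + t := by linarith
  have hb := Real.abs_log_sub_add_sum_range_le (x := -t) (by rw [abs_neg]; linarith) 2
  have hb1 := Real.abs_log_sub_add_sum_range_le (x := -t) (by rw [abs_neg]; linarith) 0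
  simp only [Finset.sum_range_succ, Finset.sum_range_zero, abs_neg, sub_neg_eq_add] at hb hb1
  norm_num at hb hb1
  have hpi := Real.pi_pos
  have e1 : Real.log (a + a * t) = Real.log a + Real.log (1+t) := by
    rw [← Real.log_mul (by positivity) (by positivity)]; ring_nf
  have e2 : Real.log (2 * Real.pi * (a + a * t)) = Real.log (2 * Real.pi * a) + Real.log (1+t) := by
    rw [← Real.log_mul (by positivity) (by positivity)]; ring_nf
  have hnn := abs_nonneg t
  have hb' : |-t + t^2/2 + Real.log (1+t)| ≤ 2 * |t|^3 := by
    refine hb.trans ?_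
    rw [div_le_iff₀ (by linarith)]
    nlinarith [pow_nonneg hnn 3]
  have hb1' : |Real.log (1+t)| ≤ 2 * |t| := by
    refine hb1.trans ?_
    rw [div_le_iff₀ (by linarith)]
    nlinarith
  have e : StF (a + a*t) - (StF a + a*t * Real.log a + (a*t)^2 / (2 * a))
      = a * ((1+t) * (-t + t^2/2 + Real.log (1+t)) - t^3/2) + Real.log (1+t) / 2 := by
    unfold StF
    rw [e1, e2]
    field_simp
    ring
  rw [e]
  have k1 : |(1+t) * (-t + t^2/2 + Real.log (1+t)) - t^3/2| ≤ 4 * |t|^3 := by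
    refine (abs_sub _ _).trans ?_
    rw [abs_mul, abs_div, abs_pow, abs_of_pos h1, abs_of_pos (two_pos : (0:ℝ) < 2)]
    have := pow_nonneg hnn 3
    have := mul_le_mul (show 1 + t ≤ 3/2 by linarith) hb' (abs_nonneg _) (by norm_num)
    linarith
  refine (abs_add_le _ _).trans ?_
  rw [abs_mul, abs_of_pos ha, abs_div, abs_of_pos (two_pos : (0:ℝ) < 2)]
  have r1 : 4 * (a * |t|)^3 / a^2 = a * (4 * |t|^3) := by field_simp
  have r2 : a * |t| / a = |t| := by field_simp
  rw [r1, r2]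
  have := mul_le_mul_of_nonneg_left k1 ha.le
  linarith

lemma factF (p A ε : ℝ) (hp : 0 < p) (hA : 0 < A) (hε0 : 0 < ε) (hε1 : ε < 1/6) :
    ∃ C > 0, ∃ N₀ : ℕ, ∀ N : ℕ, N₀ ≤ N → 1 ≤ N → ∀ m : ℕ, ∀ d : ℝ,
      |d| ≤ A * (N:ℝ) ^ ((2:ℝ)/3 - ε) → (m:ℝ) = p * N + d →
      |Real.log (m.factorial : ℝ) - (StF (p * N) + d * Real.log (p * N) + d^2 / (2 * (p * N)))|
        ≤ C * (N:ℝ) ^ (-(3 * ε)) := by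
  have hlim : Filter.Tendsto (fun N : ℕ => (N:ℝ) ^ (-(1/3 + ε))) Filter.atTop (nhds 0) :=
    (tendsto_rpow_neg_atTop (by linarith)).comp tendsto_natCast_atTop_atTop
  have hev := hlim.eventually (gt_mem_nhds (show 0 < p / (2 * A) by positivity))
  obtain ⟨N₀, hN₀⟩ := Filter.eventually_atTop.1 hev
  refine ⟨1/p + (4 * A^3/p^2 + A/p), by positivity, N₀, fun N hN hN1 m d hd hm => ?_⟩
  have hs := hN₀ N hN
  have hN1' : (1:ℝ) ≤ N := by exact_mod_cast hN1
  have hNp : (0:ℝ) < N := by linarith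
  have x1 : (N:ℝ) ^ ((2:ℝ)/3 - ε) = N * (N:ℝ) ^ (-(1/3 + ε)) := by
    nth_rewrite 2 [← Real.rpow_one (N:ℝ)]
    rw [← Real.rpow_add hNp]; congr 1; ring
  have x2 : (N:ℝ) ^ (-(1/3 + ε)) ≤ (N:ℝ) ^ (-(3 * ε)) :=
    Real.rpow_le_rpow_of_exponent_le hN1' (by linarith)
  have x3 : 1 / (N:ℝ) ≤ (N:ℝ) ^ (-(3 * ε)) := by
    rw [one_div, ← Real.rpow_neg_one]
    exact Real.rpow_le_rpow_of_exponent_le hN1' (by linarith)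
  have x4 : ((N:ℝ) ^ ((2:ℝ)/3 - ε))^3 = N^2 * (N:ℝ) ^ (-(3 * ε)) := by
    rw [← Real.rpow_natCast, ← Real.rpow_natCast, ← Real.rpow_mul hNp.le, ← Real.rpow_add hNp]
    congr 1; push_cast; ring
  have hEpos : 0 < (N:ℝ) ^ (-(3 * ε)) := Real.rpow_pos_of_pos hNp _
  set E := (N:ℝ) ^ (-(3 * ε)) with hE
  have ha : 0 < p * N := by positivity
  have hd2 : |d| ≤ p * N / 2 := by
    refine hd.trans ?_
    rw [x1]
    rw [lt_div_iff₀ (by positivity)] at hs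
    nlinarith
  have hmlow : p * N / 2 ≤ m := by
    have := (abs_le.1 hd2).1
    rw [hm]; linarith
  have hm0 : m ≠ 0 := by
    rintro rfl
    push_cast at hmlow
    linarith
  have s1 := stir_abs m hm0
  have s2 := taylorF (p * N) d ha hd2
  rw [← hm] at s2
  have b1 : 1 / (2 * (m:ℝ)) ≤ 1/p * E := by
    calc 1 / (2 * (m:ℝ)) ≤ 1 / (p * N) := one_div_le_one_div_of_le ha (by linarith)
      _ = 1/p * (1/N) := by field_simp
      _ ≤ _ := by gcongr
  have b2 : |d| / (p * N) ≤ A/p * E := by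
    calc |d| / (p * N) ≤ A * (N * (N:ℝ) ^ (-(1/3 + ε))) / (p * N) := by rw [← x1]; gcongr
      _ = A/p * (N:ℝ) ^ (-(1/3 + ε)) := by field_simp
      _ ≤ _ := by gcongr
  have b3 : 4 * |d|^3 / (p * N)^2 ≤ 4 * A^3/p^2 * E := by
    calc 4 * |d|^3 / (p * N)^2 ≤ 4 * (A * (N:ℝ) ^ ((2:ℝ)/3 - ε))^3 / (p * N)^2 := by gcongr
      _ = _ := by rw [mul_pow, x4]; field_simp
  have := abs_sub_le (Real.log (m.factorial : ℝ)) (StF m) (StF (p * N) + d * Real.log (p * N) + d^2 / (2 * (p * N)))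
  rw [add_mul, add_mul]
  linarith

lemma expand_F (p N d : ℝ) (hp : 0 < p) (hN : 0 < N) :
    StF (p * N) + d * Real.log (p * N) + d^2 / (2 * (p * N)) =
      p * N * (Real.log p + Real.log N) - p * N + (Real.log (2 * Real.pi) + Real.log p + Real.log N) / 2
        + d * (Real.log p + Real.log N) + d^2 / (2 * (p * N)) := by
  have hpi := Real.pi_pos
  unfold StF
  rw [Real.log_mul (x := 2 * Real.pi) (by positivity) (by positivity), Real.log_mul hp.ne' hN.ne']
  ring

/-- From closeness of logarithms to relative closeness. -/
lemma rel_of_log (P G C E : ℝ) (hP : 0 < P) (hG : 0 < G) (hC : 0 < C) (hE0 : 0 ≤ E) (hE : E ≤ 1)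
    (h : |Real.log P - Real.log G| ≤ C * E) : |P - G| ≤ C * Real.exp C * E * G := by
  set δ := Real.log P - Real.log G with hδ
  have hPG : P = G * Real.exp δ := by
    rw [hδ, Real.exp_sub, Real.exp_log hP, Real.exp_log hG]; field_simp
  have h1 : |Real.exp δ - 1| ≤ |δ| * Real.exp |δ| := by
    rw [abs_le]
    have a1 := Real.add_one_le_exp δ
    have a2 := Real.add_one_le_exp (-|δ|)
    have a3 : 1 ≤ Real.exp |δ| := Real.one_le_exp (abs_nonneg δ)
    have a4 : Real.exp (-|δ|) * Real.exp |δ| = 1 := by rw [← Real.exp_add]; simp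
    have a5 : Real.exp δ ≤ Real.exp |δ| := Real.exp_le_exp.2 (le_abs_self δ)
    have a6 := neg_abs_le δ
    have a7 := abs_nonneg δ
    constructor <;> nlinarith
  have h2 : |δ| ≤ C := h.trans (by nlinarith)
  have h3 : P - G = (Real.exp δ - 1) * G := by rw [hPG]; ring
  rw [h3, abs_mul, abs_of_pos hG]
  gcongr
  calc _ ≤ _ := h1
    _ ≤ (C * E) * Real.exp C := by gcongr
    _ = _ := by ring

/-- Quantum de Moivre–Laplace theorem for fermions: at fixed density `α = N/M < 1`,
for counts in the central region `|nᵢ - N qᵢ| ≤ A N^(2/3-ε)`, the average fermionic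
counting probability is the Gaussian up to a relative error `O(N^(-3ε))`. -/
theorem deMoivreLaplace_fermions
    (r : ℕ) (hr : 2 ≤ r) (q : Fin r → ℚ)
    (hq0 : ∀ i, 0 < q i) (hq1 : ∀ i, q i < 1) (hqsum : ∑ i, q i = 1)
    (α : ℚ) (hα0 : 0 < α) (hα1 : α < 1)
    (A ε : ℝ) (hA : 0 < A) (hε0 : 0 < ε) (hε1 : ε < 1 / 6) :
    ∃ C > 0, ∃ N₀ : ℕ, ∀ N : ℕ, N₀ ≤ N → ∀ M : ℕ, α * M = N →
      ∀ K : Fin r → ℕ, (∀ i, (K i : ℚ) = q i * M) →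
      ∀ n : Fin r → ℕ, ∑ i, n i = N → (∀ i, n i ≤ K i) →
      (∀ i, |(n i : ℝ) - (N : ℝ) * (q i : ℝ)| ≤ A * (N : ℝ) ^ ((2 : ℝ) / 3 - ε)) →
      |PF M n K - GaussF N n q α| ≤ C * (N : ℝ) ^ (-(3 * ε)) * GaussF N n q α := by
  have hα0' : (0:ℝ) < α := by exact_mod_cast hα0
  have hα1' : (α:ℝ) < 1 := by exact_mod_cast hα1
  have hq0' : ∀ i, (0:ℝ) < q i := fun i => by exact_mod_cast hq0 i
  have hqs' : ∑ i, (q i : ℝ) = 1 := by exact_mod_cast hqsum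
  have h1α : (0:ℝ) < 1 - α := by linarith
  obtain ⟨β, hβ⟩ : ∃ β : ℝ, β = (1 - α) / α := ⟨_, rfl⟩
  have hβ0 : 0 < β := by rw [hβ]; positivity
  have hαβ : (α:ℝ) = 1 / (1 + β) := by rw [hβ]; field_simp; ring
  obtain ⟨Ca, hCa, Na, ha⟩ := factF 1 A ε one_pos hA hε0 hε1
  obtain ⟨Cb, hCb, Nb, hb⟩ := factF β A ε hβ0 hA hε0 hε1
  obtain ⟨Cc, hCc, Nc, hc⟩ := factF (1 + β) A ε (by positivity) hA hε0 hε1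
  choose C1 hC1 N1 h1 using fun i => factF (q i) A ε (hq0' i) hA hε0 hε1
  choose C2 hC2 N2 h2 using fun i => factF (q i * β) A ε (mul_pos (hq0' i) hβ0) hA hε0 hε1
  choose C3 hC3 N3 h3 using fun i => factF (q i * (1 + β)) A ε (mul_pos (hq0' i) (by positivity)) hA hε0 hε1
  have hCS : 0 ≤ ∑ i, (C1 i + C2 i + C3 i) :=
    Finset.sum_nonneg fun i _ => by linarith [hC1 i, hC2 i, hC3 i]
  obtain ⟨C, hC⟩ : ∃ C, C = Ca + Cb + Cc + ∑ i, (C1 i + C2 i + C3 i) := ⟨_, rfl⟩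
  have hC0 : 0 < C := by rw [hC]; linarith
  refine ⟨C * Real.exp C, by positivity, 1 + Na + Nb + Nc + ∑ i, (N1 i + N2 i + N3 i), ?_⟩
  intro N hN M hM K hK n hn hnK hnd
  have hNi : ∀ i, N1 i + N2 i + N3 i ≤ ∑ i, (N1 i + N2 i + N3 i) := fun i =>
    Finset.single_le_sum (f := fun i => N1 i + N2 i + N3 i) (fun _ _ => Nat.zero_le _) (Finset.mem_univ i)
  have hN1 : 1 ≤ N := by omega
  have hN1' : (1:ℝ) ≤ N := by exact_mod_cast hN1
  have hNp : (0:ℝ) < N := by linarith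
  have hM' : (α:ℝ) * M = N := by exact_mod_cast hM
  have hMβ : (M:ℝ) = (1 + β) * N := by rw [← hM', hαβ]; field_simp
  have hNM : N ≤ M := by
    have : (N:ℝ) ≤ M := by rw [hMβ]; nlinarith
    exact_mod_cast this
  have hK' : ∀ i, (K i : ℝ) = q i * (1 + β) * N := fun i => by
    have : (K i : ℝ) = q i * M := by exact_mod_cast hK i
    rw [this, hMβ]; ring
  obtain ⟨d, hd⟩ : ∃ d : Fin r → ℝ, ∀ i, d i = n i - N * q i := ⟨_, fun i => rfl⟩
  have hdsum : ∑ i, d i = 0 := by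
    simp only [hd, Finset.sum_sub_distrib, ← Finset.mul_sum, hqs']
    rw [← hn]; push_cast; ring
  have hR : 0 ≤ A * (N:ℝ) ^ ((2:ℝ)/3 - ε) := by positivity
  have hR0 : |(0:ℝ)| ≤ A * (N:ℝ) ^ ((2:ℝ)/3 - ε) := by rw [abs_zero]; exact hR
  have hdR : ∀ i, |d i| ≤ A * (N:ℝ) ^ ((2:ℝ)/3 - ε) := fun i => by rw [hd]; exact hnd i
  have fa := ha N (by omega) hN1 N 0 hR0 (by ring)
  have fb := hb N (by omega) hN1 (M - N) 0 hR0 (by rw [Nat.cast_sub hNM, hMβ]; ring)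
  have fc := hc N (by omega) hN1 M 0 hR0 (by rw [hMβ]; ring)
  have f1 := fun i => h1 i N (by have := hNi i; omega) hN1 (n i) (d i) (hdR i) (by rw [hd]; ring)
  have f2 := fun i => h2 i N (by have := hNi i; omega) hN1 (K i - n i) (-d i)
    (by rw [abs_neg]; exact hdR i) (by rw [Nat.cast_sub (hnK i), hd, hK']; ring)
  have f3 := fun i => h3 i N (by have := hNi i; omega) hN1 (K i) 0 hR0 (by rw [hK']; ring)
  have hE0 : 0 ≤ (N:ℝ) ^ (-(3 * ε)) := by positivity
  have hE1 : (N:ℝ) ^ (-(3 * ε)) ≤ 1 := Real.rpow_le_one_of_one_le_of_nonpos hN1' (by linarith)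
  have hpi := Real.pi_pos
  have hPpos : 0 < PF M n K := by
    unfold PF; positivity
  have hsq : 0 < ∏ i, Real.sqrt (q i : ℝ) := Finset.prod_pos fun i _ => Real.sqrt_pos.2 (hq0' i)
  have hGpos : 0 < GaussF N n q α := by
    unfold GaussF; positivity
  apply rel_of_log _ _ _ _ hPpos hGpos hC0 hE0 hE1
  have hfac : ∀ m : ℕ, (m.factorial : ℝ) ≠ 0 := fun m => by positivity
  have hlogP : Real.log (PF M n K) = Real.log (N.factorial : ℝ) + Real.log ((M - N).factorial : ℝ)
      - Real.log (M.factorial : ℝ) + ∑ i, (Real.log ((K i).factorial : ℝ) - Real.log ((n i).factorial : ℝ)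
        - Real.log ((K i - n i).factorial : ℝ)) := by
    unfold PF
    rw [hn, Real.log_mul (by positivity) (by positivity), Real.log_mul (by positivity) (by positivity),
      Real.log_div (by positivity) (by positivity), Real.log_div (by positivity) (by positivity),
      Real.log_prod (fun i _ => hfac _), Real.log_prod (fun i _ => div_ne_zero (hfac _) (hfac _))]
    simp only [Real.log_div (hfac _) (hfac _), Finset.sum_sub_distrib]
    ring
  have hlogG : Real.log (GaussF N n q α) = -∑ i, d i ^ 2 / (2 * (1 - α) * q i * N)
      - ((r:ℝ) - 1) / 2 * (Real.log (2 * Real.pi) + Real.log (1 - α) + Real.log N)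
      - ∑ i, Real.log (q i) / 2 := by
    unfold GaussF
    rw [Real.log_div (by positivity) (by positivity), Real.log_exp, Real.log_mul (by positivity) (by positivity),
      Real.log_rpow (by positivity), Real.log_mul (by positivity) (by positivity),
      Real.log_mul (x := 2 * Real.pi) (by positivity) (by positivity),
      Real.log_prod (fun i _ => (Real.sqrt_pos.2 (hq0' i)).ne')]
    simp only [Real.log_sqrt (hq0' _).le]
    have : -(N:ℝ) * ∑ i, ((n i : ℝ) / (N : ℝ) - (q i : ℝ)) ^ 2 / (2 * (1 - (α : ℝ)) * (q i : ℝ))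
        = -∑ i, d i ^ 2 / (2 * (1 - α) * q i * N) := by
      rw [neg_mul, Finset.mul_sum]
      congr 1
      refine Finset.sum_congr rfl fun i _ => ?_
      have := hq0' i
      rw [hd]
      field_simp
    rw [this]; ring
  rw [expand_F _ _ _ (by positivity) hNp] at fa fb fc
  have f1' := fun i => by simpa only [expand_F _ _ _ (hq0' i) hNp] using f1 i
  have f2' := fun i => by simpa only [expand_F _ _ _ (mul_pos (hq0' i) hβ0) hNp] using f2 i
  have f3' := fun i => by
    simpa only [expand_F _ _ _ (mul_pos (hq0' i) (show 0 < 1 + β by positivity)) hNp] using f3 i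
  have hl1α : Real.log (1 - α) = Real.log β - Real.log (1 + β) := by
    rw [← Real.log_div (by positivity) (by positivity), hαβ]; congr 1; field_simp; ring
  set b := Real.log β
  set g := Real.log (1 + β)
  set x := Real.log N
  set w := Real.log (2 * Real.pi)
  set E := (N:ℝ) ^ (-(3 * ε))
  -- per-index estimate
  have hi : ∀ i, |(Real.log ((K i).factorial : ℝ) - Real.log ((n i).factorial : ℝ)
        - Real.log ((K i - n i).factorial : ℝ)) -
      (q i * (N * ((1 + β) * g - β * b)) + (g - b - x - w) / 2 - Real.log (q i) / 2 + d i * b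
        - d i ^ 2 / (2 * (1 - α) * q i * N))| ≤ (C1 i + C2 i + C3 i) * E := by
    intro i
    have hqi := hq0' i
    have g1 := f1' i
    have g2 := f2' i
    have g3 := f3' i
    rw [Real.log_mul hqi.ne' hβ0.ne'] at g2
    rw [Real.log_mul hqi.ne' (by positivity)] at g3
    have key : d i ^ 2 / (2 * (1 - α) * q i * N) = d i ^ 2 / (2 * (q i * N)) + d i ^ 2 / (2 * (q i * β * N)) := by
      have : 1 - (α:ℝ) = β / (1 + β) := by rw [hαβ]; field_simp; ring
      rw [this]; field_simp; ring
    rw [key]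
    rw [neg_sq] at g2
    rw [abs_le] at g1 g2 g3 ⊢
    simp only [ne_eq, OfNat.ofNat_ne_zero, not_false_eq_true, zero_pow, zero_div, zero_mul, add_zero] at g3
    constructor <;> linarith [g1.1, g1.2, g2.1, g2.2, g3.1, g3.2]
  have hsum := (Finset.abs_sum_le_sum_abs _ Finset.univ).trans (Finset.sum_le_sum fun i _ => hi i)
  have hexp : ∑ i, (q i * (N * ((1 + β) * g - β * b)) + (g - b - x - w) / 2 - Real.log (q i) / 2 + d i * b
        - d i ^ 2 / (2 * (1 - α) * q i * N)) = N * ((1 + β) * g - β * b) + r * ((g - b - x - w) / 2)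
        - ∑ i, Real.log (q i) / 2 - ∑ i, d i ^ 2 / (2 * (1 - α) * q i * N) := by
    simp only [Finset.sum_add_distrib, Finset.sum_sub_distrib, ← Finset.sum_mul, hqs', hdsum,
      Finset.sum_const, Finset.card_univ, Fintype.card_fin, nsmul_eq_mul]
    ring
  rw [Finset.sum_sub_distrib, hexp, ← Finset.sum_mul] at hsum
  rw [hlogP, hlogG, hl1α, hC]
  simp only [ne_eq, OfNat.ofNat_ne_zero, not_false_eq_true, zero_pow, zero_div, zero_mul, add_zero,
    Real.log_one, zero_add, one_mul] at fa fb fc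
  rw [abs_le] at fa fb fc hsum ⊢
  constructor <;> linarith [fa.1, fa.2, fb.1, fb.2, fc.1, fc.2, hsum.1, hsum.2]
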